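/- arXiv:2308.16728 — 2 statements merged into one kernel-verified Lean document; each statement's English description precedes it below -/
import Mathlib

section
/- Let H be a bipartite graph with no vertex of degree 1, and let 0 < a < 1/3 and c > 0 be reals. There exist a constant C > 0 and an integer n₀ such that the following holds: suppose n ≥ n₀, d := n^a is an integer, and G is an H-free d-regular graph on n vertices; let ρ_1 ≥ ρ_2 ≥ ⋯ ≥ ρ_n be the eigenvalues of the adjacency matrix of G, and set ρ := ρ_2 if G is bipartite and ρ := max{ρ_2, −ρ_n} otherwise; if ρ ≤ c·d^{1/2}, then f(m, H) ≤ C · m^{2/(1+a) − 1} · (log m)^{1/(1+a)}, where m := ⌊(1/4)·n^{(1+a)/2}/(log n)^{1/2}⌋. -/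
open SimpleGraph

/-- `G` is an `(r,k)`-graph: its vertex set can be partitioned into `r` parts,
each of size at most `k`, with at least one edge between any two distinct parts. -/
def IsRKGraph {V : Type} [Fintype V] (G : SimpleGraph V) (r k : ℕ) : Prop :=
  ∃ P : Fin r → Finset V,
    (∀ v : V, ∃! i, v ∈ P i) ∧
    (∀ i, (P i).card ≤ k) ∧
    ∀ i j : Fin r, i ≠ j → ∃ u ∈ P i, ∃ w ∈ P j, G.Adj u w

/-- `G` contains a subgraph isomorphic to `H`. -/
def ContainsSub {W V : Type} (H : SimpleGraph W) (G : SimpleGraph V) : Prop :=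
  ∃ f : H →g G, Function.Injective f

/-- `f(r,H)`: the minimum `k` for which there exists an `H`-free `(r,k)`-graph. -/
noncomputable def fGraph {W : Type} (H : SimpleGraph W) (r : ℕ) : ℕ :=
  sInf {k | ∃ (n : ℕ) (G : SimpleGraph (Fin n)), ¬ ContainsSub H G ∧ IsRKGraph G r k}

/-
Color the vertices of `G` with `m` colors uniformly at random; the color classes are the parts.
Expose the darts (oriented edges) one at a time. Suppose that no earlier dart leads from color `i`
to color `j`. Vertices keep this property when recolored with a third color, so a given vertex has
a given color with probability about `1 / m` at most, and, as `m > 4Δ + 2`, at least half of the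
surviving colorings let the ends of the next dart be recolored `i` and `j` without making an earlier
dart bad. Such a recoloring is `m²`-to-one, so the next dart leads from `i` to `j` with conditional
probability at least `1 / (2m²)`. Over all `2e` darts the pair `(i, j)` is therefore missed with
probability at most `exp (-e / m²)`, while the moment generating function of a class size shows that
a class exceeds `4n / m` with probability at most `exp (-n / m)`. A union bound succeeds as soon as
`e ≥ 3 m² log m`: since `2e ≤ nΔ ≤ nm / 4`, this also forces `n / m ≥ 2 log m`. For `d = n ^ a` and
`m ^ 2` of order `n ^ (1 + a) / log n`, `log n` and `log m` are of the same order, so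
`n ^ (1 + a) = O(m² log m)` turns `4n / m` into a function of `m`.
-/

section Recoloring

open Finset

variable {V ι : Type*}

lemma card_le_card_mul_pow_of_recoloring [Fintype ι] {A B : Finset (V → ι)} (T : Finset V)
    (r : (V → ι) → V → ι) (hr : ∀ χ ∈ A, r χ ∈ B) (hT : ∀ χ ∈ A, ∀ v ∉ T, r χ v = χ v) :
    #A ≤ #B * Fintype.card ι ^ #T := by
  classical
  have hinj : Set.InjOn (fun χ ↦ (r χ, fun v : T ↦ χ v)) A := by
    intro χ hχ ψ hψ h
    obtain ⟨hr, hrestrict⟩ := Prod.ext_iff.1 h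
    funext v
    by_cases hv : v ∈ T
    · exact congrFun hrestrict ⟨v, hv⟩
    · rw [← hT χ hχ v hv, ← hT ψ hψ v hv]
      exact congrFun hr v
  calc #A ≤ #(B ×ˢ (univ : Finset (T → ι))) :=
        card_le_card_of_injOn _ (fun χ hχ ↦ by simpa using hr χ hχ) hinj
    _ = #B * Fintype.card ι ^ #T := by simp

variable [DecidableEq V] [DecidableEq ι]

lemma card_filter_apply_eq_mul_card_le {D : Finset (V → ι)} {C : Finset ι}
    (v : V) (k : ι) (h : ∀ χ ∈ D, ∀ c ∈ C, Function.update χ v c ∈ D) :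
    #{χ ∈ D | χ v = k} * #C ≤ #D := by
  rw [← card_product]
  refine card_le_card_of_injOn (fun p ↦ Function.update p.1 v p.2) ?_ ?_
  · rintro ⟨χ, c⟩ hp
    simp only [coe_product, Set.mem_prod, mem_coe, mem_filter] at hp
    exact h χ hp.1.1 c hp.2
  · rintro ⟨χ, c⟩ hp ⟨ψ, b⟩ hq hpq
    simp only [coe_product, Set.mem_prod, mem_coe, mem_filter] at hp hq
    have hval : ∀ u, Function.update χ v c u = Function.update ψ v b u := congrFun hpq
    have hcb : c = b := by simpa using hval v
    have hχψ : χ = ψ := by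
      funext u
      rcases eq_or_ne u v with rfl | hu
      · rw [hp.1.2, hq.1.2]
      · simpa [hu] using hval u
    rw [hcb, hχψ]

lemma card_filter_exists_apply_eq_mul_card_le {D : Finset (V → ι)} {C : Finset ι}
    (N : Finset V) (k : ι)
    (h : ∀ χ ∈ D, ∀ v ∈ N, ∀ c ∈ C, Function.update χ v c ∈ D) :
    #{χ ∈ D | ∃ v ∈ N, χ v = k} * #C ≤ #N * #D := by
  classical
  have hcover : #{χ ∈ D | ∃ v ∈ N, χ v = k} ≤ ∑ v ∈ N, #{χ ∈ D | χ v = k} := by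
    refine (card_le_card fun χ hχ ↦ ?_).trans card_biUnion_le
    obtain ⟨hχD, v, hv, hvk⟩ := mem_filter.1 hχ
    exact mem_biUnion.2 ⟨v, hv, mem_filter.2 ⟨hχD, hvk⟩⟩
  calc #{χ ∈ D | ∃ v ∈ N, χ v = k} * #C
      ≤ ∑ v ∈ N, #{χ ∈ D | χ v = k} * #C := by rw [← sum_mul]; gcongr
    _ ≤ #N * #D := sum_le_card_nsmul _ _ _ fun v hv ↦
        card_filter_apply_eq_mul_card_le v k fun χ hχ ↦ h χ hχ v hv

end Recoloring

section Avoiding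

open Finset

variable {V ι : Type*} [Fintype V] [DecidableEq V] [Fintype ι] [DecidableEq ι]
  {G : SimpleGraph V} {E : Finset G.Dart} {i j : ι}

/-- The colorings of the vertices for which no dart of `E` leads from color `i` to color `j`; the
failure event in the random coloring, exposed one dart at a time. -/
def avoidingColorings (E : Finset G.Dart) (i j : ι) : Finset (V → ι) :=
  {χ | ∀ e ∈ E, ¬ (χ e.fst = i ∧ χ e.snd = j)}

lemma mem_avoidingColorings {χ : V → ι} :
    χ ∈ avoidingColorings E i j ↔ ∀ e ∈ E, ¬ (χ e.fst = i ∧ χ e.snd = j) := by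
  simp [avoidingColorings]

lemma update_mem_avoidingColorings {χ : V → ι} (hχ : χ ∈ avoidingColorings E i j) (v : V) {c : ι}
    (hci : c ≠ i) (hcj : c ≠ j) : Function.update χ v c ∈ avoidingColorings E i j := by
  rw [mem_avoidingColorings] at hχ ⊢
  rintro e he ⟨hi, hj⟩
  have hfst : e.fst ≠ v := by rintro rfl; exact hci (by simpa using hi)
  have hsnd : e.snd ≠ v := by rintro rfl; exact hcj (by simpa using hj)
  rw [Function.update_of_ne hfst] at hi
  rw [Function.update_of_ne hsnd] at hj
  exact hχ e he ⟨hi, hj⟩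

lemma update_update_mem_avoidingColorings {χ : V → ι} (hχ : χ ∈ avoidingColorings E i j)
    (hij : i ≠ j) {d : G.Dart} (hd : d ∉ E) (hfst : ∀ w, G.Adj d.fst w → χ w ≠ j)
    (hsnd : ∀ u, G.Adj d.snd u → χ u ≠ i) :
    Function.update (Function.update χ d.fst i) d.snd j ∈ avoidingColorings E i j := by
  rw [mem_avoidingColorings] at hχ ⊢
  rintro e he ⟨hi, hj⟩
  have he₁ : e.fst ≠ d.snd := by rintro h; simp [h, hij.symm] at hi
  have he₂ : e.snd ≠ d.fst := by rintro h; simp [h, d.fst_ne_snd, hij] at hj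
  rw [Function.update_of_ne he₁] at hi
  rcases eq_or_ne e.fst d.fst with h₁ | h₁ <;> rcases eq_or_ne e.snd d.snd with h₂ | h₂
  · exact hd (Dart.ext e d (Prod.ext h₁ h₂) ▸ he)
  · rw [Function.update_of_ne h₂, Function.update_of_ne he₂] at hj
    exact hfst e.snd (h₁ ▸ e.adj) hj
  · rw [Function.update_of_ne h₁] at hi
    exact hsnd e.fst (h₂ ▸ e.adj.symm) hi
  · rw [Function.update_of_ne h₁] at hi
    rw [Function.update_of_ne h₂, Function.update_of_ne he₂] at hj
    exact hχ e he ⟨hi, hj⟩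

variable [DecidableRel G.Adj]

lemma card_avoidingColorings_le_two_mul (hm : 4 * G.maxDegree + 2 < Fintype.card ι)
    (E : Finset G.Dart) (i j : ι) (s t : V) :
    #(avoidingColorings E i j) ≤
      2 * #{χ ∈ avoidingColorings E i j |
        (∀ w, G.Adj s w → χ w ≠ j) ∧ ∀ u, G.Adj t u → χ u ≠ i} := by
  set D := avoidingColorings E i j
  set free := {χ ∈ D | (∀ w, G.Adj s w → χ w ≠ j) ∧ ∀ u, G.Adj t u → χ u ≠ i}
  have hcard : 4 * G.maxDegree < #({i, j}ᶜ : Finset ι) := by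
    have := card_compl ({i, j} : Finset ι)
    have := card_le_two (a := i) (b := j)
    lia
  have hblocked : ∀ (v : V) (k : ι),
      #{χ ∈ D | ∃ w ∈ G.neighborFinset v, χ w = k} * #({i, j}ᶜ : Finset ι) ≤
        G.maxDegree * #D := by
    intro v k
    refine (card_filter_exists_apply_eq_mul_card_le _ k fun χ hχ w _ c hc ↦ ?_).trans
      (Nat.mul_le_mul_right _ (G.degree_le_maxDegree v))
    simp only [mem_compl, mem_insert, mem_singleton, not_or] at hc
    exact update_mem_avoidingColorings hχ w hc.1 hc.2
  have hcover : #D ≤ #free + #{χ ∈ D | ∃ w ∈ G.neighborFinset s, χ w = j} +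
      #{χ ∈ D | ∃ u ∈ G.neighborFinset t, χ u = i} := by
    refine (card_le_card fun χ hχ ↦ ?_).trans
      ((card_union_le _ _).trans (Nat.add_le_add_right (card_union_le _ _) _))
    simp only [free, mem_union, mem_filter, hχ, true_and, mem_neighborFinset]
    grind
  have hs := hblocked s j
  have ht := hblocked t i
  nlinarith

lemma card_avoidingColorings_insert_le (hm : 4 * G.maxDegree + 2 < Fintype.card ι) (hij : i ≠ j)
    {d : G.Dart} (hd : d ∉ E) :
    2 * Fintype.card ι ^ 2 * #(avoidingColorings (insert d E) i j) + #(avoidingColorings E i j) ≤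
      2 * Fintype.card ι ^ 2 * #(avoidingColorings E i j) := by
  have hsub : avoidingColorings (insert d E) i j ⊆ avoidingColorings E i j := fun χ hχ ↦
    mem_avoidingColorings.2 fun e he ↦ mem_avoidingColorings.1 hχ e (mem_insert_of_mem he)
  have hrecolor := card_le_card_mul_pow_of_recoloring
    (A := {χ ∈ avoidingColorings E i j |
      (∀ w, G.Adj d.fst w → χ w ≠ j) ∧ ∀ u, G.Adj d.snd u → χ u ≠ i})
    (B := avoidingColorings E i j \ avoidingColorings (insert d E) i j) {d.fst, d.snd}
    (fun χ ↦ Function.update (Function.update χ d.fst i) d.snd j) ?_ ?_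
  · rw [card_pair d.fst_ne_snd] at hrecolor
    have hhalf := card_avoidingColorings_le_two_mul hm E i j d.fst d.snd
    have hsplit := card_sdiff_add_card_eq_card hsub
    rw [← hsplit] at hhalf ⊢
    nlinarith
  · intro χ hχ
    obtain ⟨hχ, hfst, hsnd⟩ := mem_filter.1 hχ
    refine mem_sdiff.2 ⟨update_update_mem_avoidingColorings hχ hij hd hfst hsnd, fun h ↦ ?_⟩
    exact mem_avoidingColorings.1 h d (mem_insert_self d E) (by simp [d.fst_ne_snd])
  · intro χ _ v hv
    simp only [mem_insert, mem_singleton, not_or] at hv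
    rw [Function.update_of_ne hv.2, Function.update_of_ne hv.1]

lemma card_avoidingColorings_le (hm : 4 * G.maxDegree + 2 < Fintype.card ι) (hij : i ≠ j)
    (E : Finset G.Dart) :
    (#(avoidingColorings E i j) : ℝ) ≤
      (Fintype.card ι : ℝ) ^ Fintype.card V *
        Real.exp (-(#E / (2 * (Fintype.card ι : ℝ) ^ 2))) := by
  induction E using Finset.induction_on with
  | empty =>
    have := card_le_univ (avoidingColorings (∅ : Finset G.Dart) i j)
    rw [Fintype.card_fun] at this
    simpa using (by exact_mod_cast this : (#(avoidingColorings (∅ : Finset G.Dart) i j) : ℝ) ≤ _)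
  | insert d E hd ih =>
    have hm0 : (0 : ℝ) < Fintype.card ι := by exact_mod_cast (by lia : 0 < Fintype.card ι)
    set x : ℝ := 1 / (2 * (Fintype.card ι : ℝ) ^ 2) with hx
    have hstep : (#(avoidingColorings (insert d E) i j) : ℝ) ≤
        #(avoidingColorings E i j) * (1 - x) := by
      have h : (2 * (Fintype.card ι : ℝ) ^ 2) * #(avoidingColorings (insert d E) i j) +
          #(avoidingColorings E i j) ≤ 2 * (Fintype.card ι : ℝ) ^ 2 * #(avoidingColorings E i j) :=
        by exact_mod_cast card_avoidingColorings_insert_le hm hij hd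
      rw [hx]
      field_simp
      linarith
    calc (#(avoidingColorings (insert d E) i j) : ℝ)
        ≤ #(avoidingColorings E i j) * Real.exp (-x) :=
          hstep.trans (by gcongr; exact Real.one_sub_le_exp_neg x)
      _ ≤ (Fintype.card ι : ℝ) ^ Fintype.card V *
            Real.exp (-(#E / (2 * (Fintype.card ι : ℝ) ^ 2))) * Real.exp (-x) := by gcongr
      _ = _ := by
        rw [mul_assoc, ← Real.exp_add, card_insert_of_notMem hd, hx]
        congr 2
        push_cast
        ring

lemma card_biUnion_avoidingColorings_le (hm : 4 * G.maxDegree + 2 < Fintype.card ι) :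
    (#((univ : Finset ι).offDiag.biUnion fun x ↦
        avoidingColorings (univ : Finset G.Dart) x.1 x.2) : ℝ) ≤
      (Fintype.card ι : ℝ) ^ 2 * ((Fintype.card ι : ℝ) ^ Fintype.card V *
        Real.exp (-(#G.edgeFinset / (Fintype.card ι : ℝ) ^ 2))) := by
  have hpairs : #(univ : Finset ι).offDiag ≤ Fintype.card ι ^ 2 := by simp [offDiag_card, sq]
  calc _ ≤ ∑ x ∈ (univ : Finset ι).offDiag,
            (#(avoidingColorings (univ : Finset G.Dart) x.1 x.2) : ℝ) := by
        exact_mod_cast card_biUnion_le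
    _ ≤ #(univ : Finset ι).offDiag • ((Fintype.card ι : ℝ) ^ Fintype.card V *
          Real.exp (-(#G.edgeFinset / (Fintype.card ι : ℝ) ^ 2))) := by
        refine sum_le_card_nsmul _ _ _ fun x hx ↦ ?_
        have := card_avoidingColorings_le hm (mem_offDiag.1 hx).2.2 (univ : Finset G.Dart)
        rwa [card_univ, G.dart_card_eq_twice_card_edges, Nat.cast_mul, Nat.cast_ofNat,
          mul_div_mul_left _ _ two_ne_zero] at this
    _ ≤ _ := by
        rw [nsmul_eq_mul]
        gcongr
        exact_mod_cast hpairs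

end Avoiding

section PartSizes

open Finset

variable {V ι : Type*} [Fintype V] [DecidableEq V] [Fintype ι] [DecidableEq ι]

lemma sum_add_one_pow_card_fiber {R : Type*} [CommSemiring R] (y : R) (i : ι) :
    ∑ χ : V → ι, (y + 1) ^ #{v | χ v = i} = (Fintype.card ι + y) ^ Fintype.card V := by
  have hcolor : ∑ c : ι, (if c = i then y + 1 else 1) = Fintype.card ι + y := by
    have : ∀ c : ι, (if c = i then y + 1 else 1) = 1 + if c = i then y else 0 := by
      intro c; split_ifs <;> ring
    simp [this, sum_add_distrib]
  calc ∑ χ : V → ι, (y + 1) ^ #{v | χ v = i}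
      = ∑ χ : V → ι, ∏ v, (if χ v = i then y + 1 else 1) := by simp [prod_ite]
    _ = ∏ _v : V, ∑ c : ι, (if c = i then y + 1 else 1) := by rw [Fintype.prod_sum]
    _ = (Fintype.card ι + y) ^ Fintype.card V := by simp [hcolor]

lemma card_filter_lt_card_fiber_mul_two_pow_le (i : ι) (k : ℕ) :
    #{χ : V → ι | k < #{v | χ v = i}} * 2 ^ (k + 1) ≤ (Fintype.card ι + 1) ^ Fintype.card V := by
  calc #{χ : V → ι | k < #{v | χ v = i}} * 2 ^ (k + 1)
      ≤ ∑ χ : V → ι with k < #{v | χ v = i}, 2 ^ #{v | χ v = i} := by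
        rw [← smul_eq_mul]
        exact card_nsmul_le_sum _ _ _ fun χ hχ ↦ pow_le_pow_right₀ one_le_two
          (Nat.succ_le_of_lt (mem_filter.1 hχ).2)
    _ ≤ ∑ χ : V → ι, 2 ^ #{v | χ v = i} := sum_le_sum_of_subset (filter_subset _ _)
    _ = (Fintype.card ι + 1) ^ Fintype.card V := by
        simpa [one_add_one_eq_two] using sum_add_one_pow_card_fiber (V := V) (1 : ℕ) i

lemma card_filter_lt_card_fiber_le [Nonempty ι] (i : ι) (k : ℕ) :
    (#{χ : V → ι | k < #{v | χ v = i}} : ℝ) ≤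
      (Fintype.card ι : ℝ) ^ Fintype.card V *
        (Real.exp (Fintype.card V / Fintype.card ι) / 2 ^ (k + 1)) := by
  have hm : (0 : ℝ) < Fintype.card ι := by exact_mod_cast Fintype.card_pos
  have hbase : (Fintype.card ι + 1 : ℝ) ≤ Fintype.card ι * Real.exp (1 / Fintype.card ι) := by
    have := mul_le_mul_of_nonneg_left (Real.add_one_le_exp (1 / (Fintype.card ι : ℝ))) hm.le
    rwa [mul_add, mul_one_div_cancel hm.ne', mul_one, add_comm] at this
  rw [mul_div_assoc', le_div_iff₀ (by positivity)]
  calc (#{χ : V → ι | k < #{v | χ v = i}} : ℝ) * 2 ^ (k + 1)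
      ≤ (Fintype.card ι + 1) ^ Fintype.card V := by
        exact_mod_cast card_filter_lt_card_fiber_mul_two_pow_le i k
    _ ≤ (Fintype.card ι * Real.exp (1 / Fintype.card ι)) ^ Fintype.card V := by gcongr
    _ = (Fintype.card ι : ℝ) ^ Fintype.card V *
          Real.exp (Fintype.card V / Fintype.card ι) := by
        rw [mul_pow, ← Real.exp_nat_mul, mul_one_div]

lemma card_biUnion_filter_lt_card_fiber_le [Nonempty ι] (k : ℕ) :
    (#((univ : Finset ι).biUnion fun i ↦ ({χ | k < #{v | χ v = i}} : Finset (V → ι))) : ℝ) ≤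
      Fintype.card ι * ((Fintype.card ι : ℝ) ^ Fintype.card V *
        (Real.exp (Fintype.card V / Fintype.card ι) / 2 ^ (k + 1))) := by
  calc _ ≤ ∑ i : ι, (#{χ : V → ι | k < #{v | χ v = i}} : ℝ) := by
        exact_mod_cast card_biUnion_le
    _ ≤ #(univ : Finset ι) • ((Fintype.card ι : ℝ) ^ Fintype.card V *
          (Real.exp (Fintype.card V / Fintype.card ι) / 2 ^ (k + 1))) :=
        sum_le_card_nsmul _ _ _ fun i _ ↦ card_filter_lt_card_fiber_le i k
    _ = _ := by simp

end PartSizes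

section Existence

open Finset

variable {V : Type} [Fintype V] (G : SimpleGraph V)

lemma isRKGraph_of_coloring {m k : ℕ} (χ : V → Fin m) (hsize : ∀ i, #{v | χ v = i} ≤ k)
    (hedge : ∀ i j, i ≠ j → ∃ e : G.Dart, χ e.fst = i ∧ χ e.snd = j) : IsRKGraph G m k := by
  refine ⟨fun i ↦ {v | χ v = i}, fun v ↦ ⟨χ v, by simp, fun i hi ↦ (mem_filter.1 hi).2.symm⟩,
    hsize, fun i j hij ↦ ?_⟩
  obtain ⟨e, hi, hj⟩ := hedge i j hij
  exact ⟨e.fst, by simpa using hi, e.snd, by simpa using hj, e.adj⟩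

variable [DecidableRel G.Adj]

lemma isRKGraph_of_union_bound {m k : ℕ} (hm : 4 * G.maxDegree + 2 < m)
    (h : (m : ℝ) ^ 2 * Real.exp (-(#G.edgeFinset / (m : ℝ) ^ 2)) +
      m * (Real.exp (Fintype.card V / m) / 2 ^ (k + 1)) < 1) : IsRKGraph G m k := by
  classical
  have : Nonempty (Fin m) := ⟨⟨0, by lia⟩⟩
  by_contra hG
  set p := Real.exp (-(#G.edgeFinset / (m : ℝ) ^ 2))
  set q := Real.exp (Fintype.card V / m) / 2 ^ (k + 1)
  set avoiding := (univ : Finset (Fin m)).offDiag.biUnion fun x ↦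
    avoidingColorings (univ : Finset G.Dart) x.1 x.2
  set oversized := (univ : Finset (Fin m)).biUnion fun i ↦
    ({χ | k < #{v | χ v = i}} : Finset (V → Fin m))
  have hcover : (univ : Finset (V → Fin m)) ⊆ avoiding ∪ oversized := by
    intro χ _
    by_contra hχ
    simp only [avoiding, oversized, mem_union, mem_biUnion, mem_offDiag, mem_filter, mem_univ,
      true_and, mem_avoidingColorings, forall_const, Prod.exists, not_or, not_exists, not_and,
      not_forall, not_not, not_lt] at hχ
    exact hG (isRKGraph_of_coloring G χ hχ.2 fun i j hij ↦ by simpa using hχ.1 i j hij)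
  have havoiding : (#avoiding : ℝ) ≤ m ^ 2 * (m ^ Fintype.card V * p) := by
    simpa using card_biUnion_avoidingColorings_le (ι := Fin m) (by simpa using hm)
  have hoversized : (#oversized : ℝ) ≤ m * (m ^ Fintype.card V * q) := by
    simpa using card_biUnion_filter_lt_card_fiber_le (V := V) (ι := Fin m) k
  have htotal : (m : ℝ) ^ Fintype.card V ≤ #avoiding + #oversized := by
    have := (card_le_card hcover).trans (card_union_le _ _)
    simp only [card_univ, Fintype.card_fun, Fintype.card_fin] at this
    exact_mod_cast this
  have hpos : (0 : ℝ) < (m : ℝ) ^ Fintype.card V :=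
    pow_pos (by exact_mod_cast (by lia : 0 < m)) _
  nlinarith

lemma two_mul_card_edgeFinset_le : 2 * #G.edgeFinset ≤ Fintype.card V * G.maxDegree := by
  rw [← G.sum_degrees_eq_twice_card_edges]
  exact sum_le_card_nsmul _ _ _ fun v _ ↦ G.degree_le_maxDegree v

lemma two_mul_log_le_card_div_of_mul_log_le_card_edgeFinset {m : ℕ} (hm : 4 * G.maxDegree + 2 < m)
    (hedges : 3 * (m : ℝ) ^ 2 * Real.log m ≤ #G.edgeFinset) :
    2 * Real.log m ≤ Fintype.card V / m := by
  have hm0 : (0 : ℝ) < m := by exact_mod_cast (by lia : 0 < m)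
  have hΔ : (4 : ℝ) * G.maxDegree ≤ m := by exact_mod_cast (by lia : 4 * G.maxDegree ≤ m)
  have hdeg : (2 : ℝ) * #G.edgeFinset ≤ Fintype.card V * G.maxDegree := by
    exact_mod_cast two_mul_card_edgeFinset_le G
  have hmlog : m * (24 * m * Real.log m) ≤ m * Fintype.card V := by
    nlinarith [(Nat.cast_nonneg (Fintype.card V) : (0 : ℝ) ≤ _)]
  have := le_of_mul_le_mul_left hmlog hm0
  rw [le_div_iff₀ hm0]
  nlinarith [Real.log_natCast_nonneg m]

lemma exp_div_two_pow_floor_le {t : ℝ} (ht : 0 ≤ t) :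
    Real.exp t / 2 ^ (⌊4 * t⌋₊ + 1) ≤ Real.exp (-t) := by
  have hpow : Real.exp (2 * t) ≤ 2 ^ (⌊4 * t⌋₊ + 1) := by
    have hfloor := (Nat.lt_floor_add_one (4 * t)).le
    calc Real.exp (2 * t) ≤ Real.exp ((⌊4 * t⌋₊ + 1 : ℕ) * Real.log 2) := by
          rw [Real.exp_le_exp]
          push_cast
          nlinarith [mul_le_mul_of_nonneg_left Real.log_two_gt_d9.le ht, Real.log_two_gt_d9]
      _ = 2 ^ (⌊4 * t⌋₊ + 1) := by rw [Real.exp_nat_mul, Real.exp_log two_pos]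
  calc Real.exp t / 2 ^ (⌊4 * t⌋₊ + 1) ≤ Real.exp t / Real.exp (2 * t) := by gcongr
    _ = Real.exp (-t) := by rw [← Real.exp_sub]; ring_nf

theorem isRKGraph_of_mul_log_le_card_edgeFinset {m : ℕ} (hm : 4 * G.maxDegree + 2 < m)
    (hedges : 3 * (m : ℝ) ^ 2 * Real.log m ≤ #G.edgeFinset) :
    IsRKGraph G m ⌊4 * (Fintype.card V / m : ℝ)⌋₊ := by
  have hm3 : (3 : ℝ) ≤ m := by exact_mod_cast (by lia : 3 ≤ m)
  have hm0 : (0 : ℝ) < m := by linarith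
  set t : ℝ := Fintype.card V / m
  have ht : 2 * Real.log m ≤ t := two_mul_log_le_card_div_of_mul_log_le_card_edgeFinset G hm hedges
  have hexp_log : Real.exp (-Real.log m) = 1 / m := by
    rw [Real.exp_neg, Real.exp_log hm0, one_div]
  have havoiding : Real.exp (-(#G.edgeFinset / (m : ℝ) ^ 2)) ≤ (1 / m) ^ 3 := by
    rw [← hexp_log, ← Real.exp_nat_mul, Real.exp_le_exp, mul_neg, neg_le_neg_iff,
      le_div_iff₀ (by positivity)]
    push_cast
    linarith
  have hoversized : Real.exp t / 2 ^ (⌊4 * t⌋₊ + 1) ≤ (1 / m) ^ 2 := by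
    refine (exp_div_two_pow_floor_le (by positivity)).trans ?_
    rw [← hexp_log, ← Real.exp_nat_mul, Real.exp_le_exp]
    push_cast
    linarith
  apply isRKGraph_of_union_bound G hm
  calc (m : ℝ) ^ 2 * Real.exp (-(#G.edgeFinset / (m : ℝ) ^ 2)) +
        m * (Real.exp t / 2 ^ (⌊4 * t⌋₊ + 1))
      ≤ (m : ℝ) ^ 2 * (1 / m) ^ 3 + m * (1 / m) ^ 2 := by gcongr
    _ = 2 / (m : ℝ) := by field_simp; norm_num
    _ < 1 := by rw [div_lt_one hm0]; linarith

lemma fGraph_le_of_isRegularOfDegree {W : Type} {H : SimpleGraph W} {n : ℕ}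
    {G : SimpleGraph (Fin n)} [DecidableRel G.Adj] (hfree : ¬ ContainsSub H G) {d m : ℕ}
    (hreg : G.IsRegularOfDegree d) (hm : 4 * d + 2 < m)
    (hedges : 6 * (m : ℝ) ^ 2 * Real.log m ≤ n * d) : (fGraph H m : ℝ) ≤ 4 * (n / m) := by
  have hΔ : G.maxDegree ≤ d := G.maxDegree_le_of_forall_degree_le d fun v ↦ (hreg v).le
  have hcount : n * d = 2 * #G.edgeFinset := by
    simp [← G.sum_degrees_eq_twice_card_edges, hreg.degree_eq]
  have hrk : IsRKGraph G m ⌊4 * (n / m : ℝ)⌋₊ := by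
    have hcount' : (n : ℝ) * d = 2 * #G.edgeFinset := by exact_mod_cast hcount
    simpa using isRKGraph_of_mul_log_le_card_edgeFinset G (by lia) (by linarith)
  have hf : fGraph H m ≤ ⌊4 * (n / m : ℝ)⌋₊ := Nat.sInf_le ⟨n, G, hfree, hrk⟩
  exact (Nat.cast_le.2 hf).trans (Nat.floor_le (by positivity))

end Existence

section Asymptotics

open Filter

/-- The number of parts `⌊n ^ ((1 + a) / 2) / (4 (log n) ^ (1 / 2))⌋` into which a graph on `n`
vertices of degree `n ^ a` is split. -/
noncomputable def numParts (a : ℝ) (n : ℕ) : ℕ :=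
  ⌊(1 / 4 : ℝ) * (n : ℝ) ^ ((1 + a) / 2) / (Real.log n) ^ ((1 : ℝ) / 2)⌋₊

lemma eventually_mul_rpow_le_rpow_div_log_rpow {b s : ℝ} (hbs : b < s) (r K : ℝ) :
    ∀ᶠ n : ℕ in atTop, K * (n : ℝ) ^ b ≤ (n : ℝ) ^ s / Real.log n ^ r := by
  have hlog := (isLittleO_log_rpow_rpow_atTop r (sub_pos.2 hbs)).bound
    (show (0 : ℝ) < (|K| + 1)⁻¹ by positivity)
  filter_upwards [tendsto_natCast_atTop_atTop (R := ℝ) |>.eventually hlog,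
    eventually_gt_atTop 1] with n hn hn1
  have hn0 : (0 : ℝ) < n := by exact_mod_cast (by lia : 0 < n)
  have hlog0 : 0 < Real.log n := Real.log_pos (by exact_mod_cast hn1)
  rw [Real.norm_of_nonneg (by positivity), Real.norm_of_nonneg (by positivity),
    le_inv_mul_iff₀ (by positivity)] at hn
  rw [le_div_iff₀ (by positivity)]
  calc K * (n : ℝ) ^ b * Real.log n ^ r
      ≤ (|K| + 1) * (n : ℝ) ^ b * Real.log n ^ r := by
        gcongr
        linarith [le_abs_self K]
    _ = (n : ℝ) ^ b * ((|K| + 1) * Real.log n ^ r) := by ring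
    _ ≤ (n : ℝ) ^ b * (n : ℝ) ^ (s - b) := by gcongr
    _ = (n : ℝ) ^ s := by rw [← Real.rpow_add hn0, add_sub_cancel]

lemma eventually_mul_rpow_le_numParts {a b : ℝ} (hb : 0 ≤ b) (hab : b < (1 + a) / 2) (K : ℝ) :
    ∀ᶠ n : ℕ in atTop, K * (n : ℝ) ^ b ≤ numParts a n := by
  filter_upwards [eventually_mul_rpow_le_rpow_div_log_rpow hab (1 / 2) (4 * (K + 1)),
    eventually_ge_atTop 1] with n hn hn1
  have hone : 1 ≤ (n : ℝ) ^ b := Real.one_le_rpow (by exact_mod_cast hn1) hb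
  have := Nat.lt_floor_add_one
    ((1 / 4 : ℝ) * (n : ℝ) ^ ((1 + a) / 2) / (Real.log n) ^ ((1 : ℝ) / 2))
  rw [mul_div_assoc] at this
  rw [numParts, mul_div_assoc]
  linarith

lemma sq_rpow_div_log_rpow (n : ℕ) (a : ℝ) :
    ((1 / 4 : ℝ) * (n : ℝ) ^ ((1 + a) / 2) / (Real.log n) ^ ((1 : ℝ) / 2)) ^ 2 =
      (n : ℝ) ^ (1 + a) / (16 * Real.log n) := by
  have hlog : (Real.log n ^ ((1 : ℝ) / 2)) ^ 2 = Real.log n := by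
    rw [← Real.sqrt_eq_rpow, Real.sq_sqrt (Real.log_natCast_nonneg n)]
  have hpow : ((n : ℝ) ^ ((1 + a) / 2)) ^ 2 = (n : ℝ) ^ (1 + a) := by
    rw [← Real.rpow_mul_natCast n.cast_nonneg]
    congr 1
    push_cast
    ring
  rw [div_pow, mul_pow, hlog, hpow]
  ring

lemma numParts_sq_mul_log_le {n : ℕ} (hn : 1 < n) (a : ℝ) :
    16 * (numParts a n : ℝ) ^ 2 * Real.log n ≤ (n : ℝ) ^ (1 + a) := by
  have hlog : 0 < Real.log n := Real.log_pos (by exact_mod_cast hn)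
  have hfloor : (numParts a n : ℝ) ^ 2 ≤ (n : ℝ) ^ (1 + a) / (16 * Real.log n) := by
    rw [← sq_rpow_div_log_rpow n a]
    gcongr
    exact Nat.floor_le (by positivity)
  rw [le_div_iff₀ (by positivity)] at hfloor
  linarith

lemma rpow_le_numParts_sq_mul_log {n : ℕ} (hn : 1 < n) {a : ℝ} (hm : 1 ≤ numParts a n) :
    (n : ℝ) ^ (1 + a) ≤ 64 * (numParts a n : ℝ) ^ 2 * Real.log n := by
  have hlog : 0 < Real.log n := Real.log_pos (by exact_mod_cast hn)
  have hm' : (1 : ℝ) ≤ numParts a n := by exact_mod_cast hm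
  have hfloor : (n : ℝ) ^ (1 + a) / (16 * Real.log n) ≤ (2 * numParts a n : ℝ) ^ 2 := by
    rw [← sq_rpow_div_log_rpow n a]
    gcongr
    have := Nat.lt_floor_add_one
      ((1 / 4 : ℝ) * (n : ℝ) ^ ((1 + a) / 2) / (Real.log n) ^ ((1 : ℝ) / 2))
    rw [← numParts] at this
    linarith
  rw [div_le_iff₀ (by positivity)] at hfloor
  linarith

lemma numParts_le_self {n : ℕ} (hn : 1 < n) {a : ℝ} (ha : a ≤ 1) : numParts a n ≤ n := by
  have hn' : (2 : ℝ) ≤ n := by exact_mod_cast hn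
  have hlog : 1 / 16 ≤ Real.log n := by
    linarith [Real.log_le_log two_pos hn', Real.log_two_gt_d9]
  have hpow : (n : ℝ) ^ (1 + a) ≤ (n : ℝ) ^ 2 := by
    rw [← Real.rpow_natCast, Nat.cast_ofNat]
    exact Real.rpow_le_rpow_of_exponent_le (by linarith) (by linarith)
  have hsq : (numParts a n : ℝ) ^ 2 ≤ (n : ℝ) ^ 2 := by
    nlinarith [numParts_sq_mul_log_le hn a, sq_nonneg (numParts a n : ℝ)]
  exact_mod_cast (pow_le_pow_iff_left₀ (by positivity) (by positivity) two_ne_zero).1 hsq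

lemma six_mul_numParts_sq_mul_log_le {n : ℕ} (hn : 1 < n) {a : ℝ} (ha : a ≤ 1) :
    6 * (numParts a n : ℝ) ^ 2 * Real.log (numParts a n) ≤ n * (n : ℝ) ^ a := by
  have hn0 : (0 : ℝ) < n := by exact_mod_cast (by lia : 0 < n)
  have hlog : Real.log (numParts a n) ≤ Real.log n := by
    rcases (numParts a n).eq_zero_or_pos with hm | hm
    · simpa [hm] using Real.log_natCast_nonneg n
    · exact Real.log_le_log (by exact_mod_cast hm) (by exact_mod_cast numParts_le_self hn ha)
  calc 6 * (numParts a n : ℝ) ^ 2 * Real.log (numParts a n)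
      ≤ 16 * (numParts a n : ℝ) ^ 2 * Real.log n := by
        gcongr
        norm_num
    _ ≤ (n : ℝ) ^ (1 + a) := numParts_sq_mul_log_le hn a
    _ = n * (n : ℝ) ^ a := by rw [Real.rpow_add hn0, Real.rpow_one]

lemma div_le_of_rpow_one_add_le {a K x y : ℝ} (ha : 0 ≤ a) (hK : 1 ≤ K) (hx : 0 ≤ x) (hy : 1 ≤ y)
    (h : x ^ (1 + a) ≤ K * (y ^ 2 * Real.log y)) :
    x / y ≤ K * y ^ (2 / (1 + a) - 1) * Real.log y ^ (1 / (1 + a)) := by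
  have hy0 : 0 < y := by linarith
  have hlog : 0 ≤ Real.log y := Real.log_nonneg hy
  have hK' : K ^ (1 / (1 + a)) ≤ K :=
    Real.rpow_le_self_of_one_le hK (by rw [div_le_one] <;> linarith)
  calc x / y = (x ^ (1 + a)) ^ (1 / (1 + a)) / y := by
        rw [← Real.rpow_mul hx, mul_one_div_cancel (by positivity), Real.rpow_one]
    _ ≤ (K * (y ^ 2 * Real.log y)) ^ (1 / (1 + a)) / y := by gcongr
    _ = K ^ (1 / (1 + a)) * y ^ (2 / (1 + a) - 1) * Real.log y ^ (1 / (1 + a)) := by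
        rw [Real.mul_rpow (by positivity) (by positivity), Real.mul_rpow (by positivity) hlog,
          ← Real.rpow_natCast_mul hy0.le, Real.rpow_sub hy0, Real.rpow_one, Nat.cast_ofNat,
          mul_one_div]
        ring
    _ ≤ K * y ^ (2 / (1 + a) - 1) * Real.log y ^ (1 / (1 + a)) := by gcongr

lemma eventually_div_numParts_le {a : ℝ} (ha : 0 ≤ a) :
    ∀ᶠ n : ℕ in atTop, (n : ℝ) / numParts a n ≤
      256 * (numParts a n : ℝ) ^ (2 / (1 + a) - 1) *
        Real.log (numParts a n) ^ (1 / (1 + a)) := by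
  filter_upwards [eventually_mul_rpow_le_numParts (a := a) (b := 1 / 4) (by norm_num)
    (by linarith) 1, eventually_gt_atTop 1] with n hroot hn
  rw [one_mul] at hroot
  have hn0 : (0 : ℝ) < n := by exact_mod_cast (by lia : 0 < n)
  have hm : (1 : ℝ) ≤ numParts a n :=
    (Real.one_le_rpow (by exact_mod_cast hn.le) (by norm_num)).trans hroot
  have hlog : Real.log n ≤ 4 * Real.log (numParts a n) := by
    have := Real.log_le_log (by positivity) hroot
    rw [Real.log_rpow hn0] at this
    linarith
  apply div_le_of_rpow_one_add_le ha (by norm_num) hn0.le hm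
  calc (n : ℝ) ^ (1 + a) ≤ 64 * (numParts a n : ℝ) ^ 2 * Real.log n :=
        rpow_le_numParts_sq_mul_log hn (by exact_mod_cast hm)
    _ ≤ 64 * (numParts a n : ℝ) ^ 2 * (4 * Real.log (numParts a n)) := by gcongr
    _ = 256 * ((numParts a n : ℝ) ^ 2 * Real.log (numParts a n)) := by ring

end Asymptotics

theorem stmt14_general {W : Type} (H : SimpleGraph W) {a : ℝ} (ha0 : 0 ≤ a) (ha : a < 1) :
    ∃ (C : ℝ) (n₀ : ℕ), 0 < C ∧
      ∀ (n d : ℕ), n₀ ≤ n → (d : ℝ) = (n : ℝ) ^ a →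
      ∀ (G : SimpleGraph (Fin n)) [DecidableRel G.Adj],
        ¬ ContainsSub H G → G.IsRegularOfDegree d →
        (fGraph H (numParts a n) : ℝ) ≤
          C * (numParts a n : ℝ) ^ (2 / (1 + a) - 1) *
            Real.log (numParts a n) ^ (1 / (1 + a)) := by
  obtain ⟨n₀, hn₀⟩ := Filter.eventually_atTop.1 <| (Filter.eventually_gt_atTop 1).and <|
    (eventually_mul_rpow_le_numParts ha0 (by linarith : a < (1 + a) / 2) 7).and <|
    eventually_div_numParts_le ha0
  refine ⟨4 * 256, n₀, by norm_num, fun n d hn hd G _ hfree hreg ↦ ?_⟩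
  obtain ⟨hn1, hdegree, hratio⟩ := hn₀ n hn
  have hd1 : (1 : ℝ) ≤ d := hd ▸ Real.one_le_rpow (by exact_mod_cast hn1.le) ha0
  have hm : 4 * d + 2 < numParts a n := by
    rw [← hd] at hdegree
    exact_mod_cast (by linarith : 4 * (d : ℝ) + 2 < numParts a n)
  have hf := fGraph_le_of_isRegularOfDegree hfree hreg hm
    (hd ▸ six_mul_numParts_sq_mul_log_le hn1 ha.le)
  linarith

/-- Let `H` be a bipartite graph with no vertex of degree 1, `0 < a < 1/3`, `c > 0`.
There exist `C > 0` and `n₀` such that: if `n ≥ n₀` (with `n ≥ 2`), `d = n^a` is an integer,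
`G` is an `H`-free `d`-regular graph on `n` vertices whose adjacency matrix has eigenvalues
`ρ 0 ≥ ρ 1 ≥ ⋯ ≥ ρ (n-1)`, and `ρ ≤ c·d^{1/2}` where `ρ := ρ_2` if `G` is bipartite and
`ρ := max{ρ_2, −ρ_n}` otherwise, then
`f(m,H) ≤ C·m^{2/(1+a)−1}·(log m)^{1/(1+a)}` where `m = ⌊(1/4)·n^{(1+a)/2}/(log n)^{1/2}⌋`. -/
theorem stmt14 {W : Type} [Fintype W] (H : SimpleGraph W) [DecidableRel H.Adj]
    (hbip : H.Colorable 2) (hdeg : ∀ v : W, H.degree v ≠ 1)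
    (a c : ℝ) (ha0 : 0 < a) (ha : a < 1 / 3) (hc : 0 < c) :
    ∃ (C : ℝ) (n₀ : ℕ), 0 < C ∧
      ∀ (n d : ℕ), n₀ ≤ n → ∀ h1 : 1 < n, (d : ℝ) = (n : ℝ) ^ a →
      ∀ (G : SimpleGraph (Fin n)) (_ : DecidableRel G.Adj),
        ¬ ContainsSub H G → G.IsRegularOfDegree d →
        ∀ (ρ : Fin n → ℝ) (hA : (G.adjMatrix ℝ).IsHermitian) (σ : Equiv.Perm (Fin n)),
          ρ = hA.eigenvalues ∘ σ → Antitone ρ →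
          (G.Colorable 2 → ρ ⟨1, h1⟩ ≤ c * (d : ℝ) ^ ((1 : ℝ) / 2)) →
          (¬ G.Colorable 2 →
            max (ρ ⟨1, h1⟩) (-(ρ ⟨n - 1, by omega⟩)) ≤ c * (d : ℝ) ^ ((1 : ℝ) / 2)) →
          (fGraph H (⌊(1 / 4 : ℝ) * (n : ℝ) ^ ((1 + a) / 2) / (Real.log n) ^ ((1 : ℝ) / 2)⌋₊) : ℝ)
            ≤ C * ((⌊(1 / 4 : ℝ) * (n : ℝ) ^ ((1 + a) / 2) / (Real.log n) ^ ((1 : ℝ) / 2)⌋₊ : ℝ)) ^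
                  (2 / (1 + a) - 1) *
                (Real.log (⌊(1 / 4 : ℝ) * (n : ℝ) ^ ((1 + a) / 2) /
                    (Real.log n) ^ ((1 : ℝ) / 2)⌋₊ : ℝ)) ^ (1 / (1 + a)) := by
  obtain ⟨C, n₀, hC, h⟩ := stmt14_general H ha0.le (by linarith)
  exact ⟨C, n₀, hC, fun n d hn _ hd G _ hfree hreg _ _ _ _ _ _ _ ↦ h n d hn hd G hfree hreg⟩
end

section
/- For every odd prime power s, f(s⁵, θ_{3,4}) ≤ 2s³. -/
open SimpleGraph

/-- The theta graph `θ_{3,4}`: three internally disjoint paths of length 4 sharing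
their two endpoints.  The endpoints are `Sum.inl 0` and `Sum.inl 1`; path `i` has internal
vertices `(i,0), (i,1), (i,2)`. -/
def theta34 : SimpleGraph ((Fin 2) ⊕ (Fin 3 × Fin 3)) :=
  SimpleGraph.fromRel (fun a b =>
    (∃ i : Fin 3, a = Sum.inl 0 ∧ b = Sum.inr (i, 0)) ∨
    (∃ i : Fin 3, a = Sum.inl 1 ∧ b = Sum.inr (i, 2)) ∨
    (∃ (i : Fin 3) (j : Fin 3) (hj : (j : ℕ) + 1 < 3),
      a = Sum.inr (i, j) ∧ b = Sum.inr (i, ⟨(j : ℕ) + 1, hj⟩)))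

/-! Colour the vertices of a bipartite graph by a field `K` and label them by `K³`, joining `(x, m)`
to `(y, m')` when `m + m' = (xy, x²y, xy²)`. Along a path of length four with colours
`a, x, c, y, b` the labels telescope, so the end labels determine both `π(x - y)` and `π(x - y)²`,
where `π = (a - c)(c - b) ≠ 0`, and hence `π` and `x - y`. If `a ≠ b`, then `c` is a root of a
quadratic and fixes `x`; if `a = b`, then `x` itself is fixed, provided `2 ≠ 0`. Either way three
paths with distinct `x` are impossible. For the parts, split `K³` as `B × B` and let a part fix the
colour of its vertices, the first half of the label on one side and the second half on the other:
given two parts, the two free halves are then chosen so that the labels add up to the value that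
the colours require. -/

section ExtremalFunction

variable {V V' W I T : Type}

lemma ContainsSub.of_iso {H : SimpleGraph W} {G : SimpleGraph V} {G' : SimpleGraph V'}
    (φ : G ≃g G') (h : ContainsSub H G) : ContainsSub H G' := by
  obtain ⟨f, hf⟩ := h
  exact ⟨φ.toHom.comp f, φ.injective.comp hf⟩

lemma isRKGraph_of_injective [Fintype V] [Fintype I] [Fintype T] {G : SimpleGraph V}
    {φ : V → I × T} (hφ : φ.Injective)
    (hadj : ∀ i j, i ≠ j → ∃ u w, (φ u).1 = i ∧ (φ w).1 = j ∧ G.Adj u w) :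
    IsRKGraph G (Fintype.card I) (Fintype.card T) := by
  classical
  let ε := Fintype.equivFin I
  refine ⟨fun i => {v | ε (φ v).1 = i}, fun v => ?_, fun i => ?_, fun i j hij => ?_⟩
  · simp
  · refine Finset.card_le_card_of_injOn (fun v => (φ v).2) (by simp) fun u hu w hw huw => ?_
    have hfst : ε (φ u).1 = ε (φ w).1 :=
      (Finset.mem_filter.1 hu).2.trans (Finset.mem_filter.1 hw).2.symm
    exact hφ (Prod.ext (ε.injective hfst) huw)
  · obtain ⟨u, w, hu, hw, huw⟩ := hadj _ _ (ε.symm.injective.ne hij)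
    exact ⟨u, by simp [hu], w, by simp [hw], huw⟩

lemma IsRKGraph.of_iso [Fintype V] [Fintype V'] {G : SimpleGraph V} {G' : SimpleGraph V'}
    {r k : ℕ} (φ : G ≃g G') (h : IsRKGraph G r k) : IsRKGraph G' r k := by
  obtain ⟨P, hpart, hcard, hadj⟩ := h
  refine ⟨fun i => (P i).map φ.toEquiv.toEmbedding, fun v => ?_, fun i => ?_, fun i j hij => ?_⟩
  · simpa [Finset.mem_map_equiv] using hpart (φ.toEquiv.symm v)
  · simpa using hcard i
  · obtain ⟨u, hu, w, hw, huw⟩ := hadj i j hij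
    exact ⟨φ u, Finset.mem_map_of_mem _ hu, φ w, Finset.mem_map_of_mem _ hw, φ.map_adj_iff.2 huw⟩

lemma fGraph_le [Fintype V] {H : SimpleGraph W} {G : SimpleGraph V} {r k : ℕ}
    (hfree : ¬ ContainsSub H G) (hG : IsRKGraph G r k) : fGraph H r ≤ k :=
  Nat.sInf_le ⟨_, G.overFin rfl, fun h => hfree (h.of_iso (G.overFinIso rfl).symm),
    hG.of_iso (G.overFinIso rfl)⟩

end ExtremalFunction

section AlgGraph

variable {α M : Type*} [AddCommGroup M]

/-- The algebraically defined bipartite graph of `g`: both sides are copies of `α × M`, a vertex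
being a colour in `α` with a label in `M`, and vertices on opposite sides are joined when their
labels add up to the value of `g` at their colours. -/
def algGraph (g : α → α → M) : SimpleGraph (α × M ⊕ α × M) where
  Adj
    | .inl u, .inr v => u.2 + v.2 = g u.1 v.1
    | .inr v, .inl u => u.2 + v.2 = g u.1 v.1
    | _, _ => False
  symm := ⟨by rintro (u | u) (v | v) h <;> exact h⟩
  loopless := ⟨by rintro (u | u) h <;> exact h⟩

/-- The colour of a vertex of an `algGraph`. -/
def vertexColor : α × M ⊕ α × M → α := Sum.elim Prod.fst Prod.fst

/-- The label of a vertex of an `algGraph`. -/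
def vertexLabel : α × M ⊕ α × M → M := Sum.elim Prod.snd Prod.snd

/-- The condition on `g` which says that `a, x, c, y, b` are the successive colours of a path of
length four in `algGraph g` that starts at a left vertex and whose end labels differ by `d`. -/
structure IsPathColoring (g : α → α → M) (a b : α) (d : M) (x c y : α) : Prop where
  sum_eq : g a x - g c x + g c y - g b y = d
  left_ne : a ≠ c
  right_ne : c ≠ b
  mid_ne : x ≠ y

/-- The condition on `g` which excludes copies of `theta34` with left endpoints from `algGraph g`:
no three path colourings with the same end data have distinct second colours. -/
def AvoidsTheta34 (g : α → α → M) : Prop :=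
  ∀ (a b : α) (d : M) (x c y : Fin 3 → α), (∀ i, IsPathColoring g a b d (x i) (c i) (y i)) →
    ¬ x.Injective

lemma AvoidsTheta34.addEquiv_comp {N : Type*} [AddCommGroup N] {g : α → α → M}
    (hg : AvoidsTheta34 g) (τ : M ≃+ N) : AvoidsTheta34 fun x y => τ (g x y) := by
  refine fun a b d x c y h => hg a b (τ.symm d) x c y fun i =>
    ⟨?_, (h i).left_ne, (h i).right_ne, (h i).mid_ne⟩
  apply τ.injective
  simpa using (h i).sum_eq

/-- The exchange of the two sides of an `algGraph`. -/
def algGraphSwap (g : α → α → M) : algGraph g ≃g algGraph (flip g) where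
  toEquiv := Equiv.sumComm _ _
  map_rel_iff' := by rintro (u | u) (v | v) <;> simp [algGraph, flip, add_comm]

variable {g : α → α → M}

lemma eq_of_algGraph_adj {u v w : α × M ⊕ α × M} (huv : (algGraph g).Adj u v)
    (huw : (algGraph g).Adj u w) (hcolor : vertexColor v = vertexColor w) : v = w := by
  rcases u with ⟨x, m⟩ | ⟨x, m⟩ <;> rcases v with ⟨y, k⟩ | ⟨y, k⟩ <;>
    rcases w with ⟨z, l⟩ | ⟨z, l⟩ <;> simp only [algGraph, vertexColor, Sum.elim_inl, Sum.elim_inr]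
      at huv huw hcolor
  all_goals subst hcolor
  · rw [add_left_cancel (huv.trans huw.symm)]
  · rw [add_right_cancel (huv.trans huw.symm)]

lemma isPathColoring_of_adj {P u v w Q : α × M ⊕ α × M} (hP : P.isLeft)
    (hPu : (algGraph g).Adj P u) (huv : (algGraph g).Adj u v) (hvw : (algGraph g).Adj v w)
    (hwQ : (algGraph g).Adj w Q) (hPv : P ≠ v) (hvQ : v ≠ Q) (huw : u ≠ w) :
    IsPathColoring g (vertexColor P) (vertexColor Q) (vertexLabel P - vertexLabel Q)
      (vertexColor u) (vertexColor v) (vertexColor w) where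
  sum_eq := by
    rcases P with P | P <;> rcases u with u | u <;> rcases v with v | v <;>
      rcases w with w | w <;> rcases Q with Q | Q <;>
      simp only [algGraph, Sum.isLeft_inr, Bool.false_eq_true] at hP hPu huv hvw hwQ
    simp only [vertexColor, vertexLabel, Sum.elim_inl, Sum.elim_inr, ← hPu, ← huv, ← hvw, ← hwQ]
    abel
  left_ne h := hPv (eq_of_algGraph_adj hPu.symm huv h)
  right_ne h := hvQ (eq_of_algGraph_adj hvw.symm hwQ h)
  mid_ne h := huw (eq_of_algGraph_adj huv.symm hvw h)

end AlgGraph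

section ThetaFree

lemma theta34_adj_path (i : Fin 3) :
    theta34.Adj (.inl 0) (.inr (i, 0)) ∧ theta34.Adj (.inr (i, 0)) (.inr (i, 1)) ∧
      theta34.Adj (.inr (i, 1)) (.inr (i, 2)) ∧ theta34.Adj (.inr (i, 2)) (.inl 1) := by
  refine ⟨⟨by simp, ?_⟩, ⟨by simp, ?_⟩, ⟨by simp, ?_⟩, ⟨by simp, ?_⟩⟩
  · exact .inl (.inl ⟨i, rfl, rfl⟩)
  · exact .inl (.inr (.inr ⟨i, 0, by decide, rfl, rfl⟩))
  · exact .inl (.inr (.inr ⟨i, 1, by decide, rfl, rfl⟩))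
  · exact .inr (.inr (.inl ⟨i, rfl, rfl⟩))

variable {α M : Type} [AddCommGroup M] {g : α → α → M}

lemma AvoidsTheta34.not_isLeft (hg : AvoidsTheta34 g) {f : theta34 →g algGraph g}
    (hf : Function.Injective f) : ¬ (f (.inl 0)).isLeft := by
  intro hleft
  have hpath (i : Fin 3) :=
    isPathColoring_of_adj hleft (f.map_adj (theta34_adj_path i).1)
      (f.map_adj (theta34_adj_path i).2.1) (f.map_adj (theta34_adj_path i).2.2.1)
      (f.map_adj (theta34_adj_path i).2.2.2) (hf.ne (by simp)) (hf.ne (by simp)) (hf.ne (by simp))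
  refine hg _ _ _ _ _ _ hpath fun i j hij => ?_
  have heq : (Sum.inr (i, 0) : Fin 2 ⊕ Fin 3 × Fin 3) = .inr (j, 0) :=
    hf (eq_of_algGraph_adj (f.map_adj (theta34_adj_path i).1)
      (f.map_adj (theta34_adj_path j).1) hij)
  simpa using heq

lemma not_containsSub_theta34_algGraph (hg : AvoidsTheta34 g) (hg' : AvoidsTheta34 (flip g)) :
    ¬ ContainsSub theta34 (algGraph g) := by
  rintro ⟨f, hf⟩
  cases h : f (.inl 0) with
  | inl P => exact hg.not_isLeft hf (by simp [h])
  | inr P =>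
    refine hg'.not_isLeft (f := (algGraphSwap g).toHom.comp f)
      ((algGraphSwap g).injective.comp hf) ?_
    simp [algGraphSwap, h]

end ThetaFree

section Parts

variable {α M B : Type} [AddCommGroup M] [AddCommGroup B]

/-- The part of a vertex of an `algGraph`, paired with its position inside the part. A part consists
of the left vertices whose colour and first half-label are prescribed and of the right vertices
whose colour and second half-label are, where `e` cuts labels into halves. -/
def partAndPosition (e : M ≃+ B × B) : α × M ⊕ α × M → (α × B) × (B ⊕ B)
  | .inl (x, m) => ((x, (e m).1), .inl (e m).2)
  | .inr (x, m) => ((x, (e m).2), .inr (e m).1)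

lemma partAndPosition_injective (e : M ≃+ B × B) :
    Function.Injective (partAndPosition (α := α) e) := by
  rintro (⟨x, m⟩ | ⟨x, m⟩) (⟨y, k⟩ | ⟨y, k⟩) h <;>
    simp only [partAndPosition, Prod.mk.injEq, Sum.inl.injEq, Sum.inr.injEq, reduceCtorEq,
      and_false] at h
  · obtain ⟨⟨rfl, h₁⟩, h₂⟩ := h
    rw [e.injective (Prod.ext h₁ h₂)]
  · obtain ⟨⟨rfl, h₂⟩, h₁⟩ := h
    rw [e.injective (Prod.ext h₁ h₂)]

lemma exists_algGraph_adj_between_parts (g : α → α → M) (e : M ≃+ B × B) (i j : α × B) :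
    ∃ u w, (partAndPosition e u).1 = i ∧ (partAndPosition e w).1 = j ∧ (algGraph g).Adj u w := by
  obtain ⟨x, β⟩ := i
  obtain ⟨y, γ⟩ := j
  let z := e (g x y)
  refine ⟨.inl (x, e.symm (β, z.2 - γ)), .inr (y, e.symm (z.1 - β, γ)), by simp [partAndPosition],
    by simp [partAndPosition], ?_⟩
  apply e.injective
  simp [z]

lemma isRKGraph_algGraph [Fintype α] [Fintype M] [Fintype B] (g : α → α → M) (e : M ≃+ B × B) :
    IsRKGraph (algGraph g) (Fintype.card α * Fintype.card B) (2 * Fintype.card B) := by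
  simpa only [Fintype.card_prod, Fintype.card_sum, two_mul] using
    isRKGraph_of_injective (partAndPosition_injective e)
      fun i j _ => exists_algGraph_adj_between_parts g e i j

end Parts

section MonomialTriple

variable {K : Type*} [CommRing K]

/-- The polynomial map whose `algGraph` has no `theta34` when `K` is a domain with `2 ≠ 0`. -/
def monomialTriple (x y : K) : K × K × K := (x * y, x ^ 2 * y, x * y ^ 2)

namespace IsPathColoring

variable {a b d₁ d₂ d₃ x c y x' c' y' : K}

lemma coord_eqs (h : IsPathColoring monomialTriple a b (d₁, d₂, d₃) x c y) :
    a * x - c * x + c * y - b * y = d₁ ∧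
      a ^ 2 * x - c ^ 2 * x + c ^ 2 * y - b ^ 2 * y = d₂ ∧
      a * x ^ 2 - c * x ^ 2 + c * y ^ 2 - b * y ^ 2 = d₃ := by
  simpa only [monomialTriple, Prod.mk_sub_mk, Prod.mk_add_mk, Prod.mk.injEq] using h.sum_eq

lemma mul_sub_eq (h : IsPathColoring monomialTriple a b (d₁, d₂, d₃) x c y) :
    (a - c) * (c - b) * (x - y) = d₂ - (a + b) * d₁ := by
  obtain ⟨h₁, h₂, -⟩ := h.coord_eqs
  linear_combination h₂ - (a + b) * h₁

lemma mul_sub_sq_eq (h : IsPathColoring monomialTriple a b (d₁, d₂, d₃) x c y) :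
    (a - c) * (c - b) * (x - y) ^ 2 = (a - b) * d₃ - d₁ ^ 2 := by
  obtain ⟨h₁, -, h₃⟩ := h.coord_eqs
  rw [← h₁, ← h₃]
  ring

variable [IsDomain K]

lemma sub_eq_sub (h : IsPathColoring monomialTriple a b (d₁, d₂, d₃) x c y)
    (h' : IsPathColoring monomialTriple a b (d₁, d₂, d₃) x' c' y') : x - y = x' - y' := by
  have hne : (a - c) * (c - b) * (x - y) ≠ 0 :=
    mul_ne_zero (mul_ne_zero (sub_ne_zero.2 h.left_ne) (sub_ne_zero.2 h.right_ne))
      (sub_ne_zero.2 h.mid_ne)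
  have hprod : (a - c) * (c - b) * (x - y) = (a - c') * (c' - b) * (x' - y') :=
    h.mul_sub_eq.trans h'.mul_sub_eq.symm
  have hprod_sq : (a - c) * (c - b) * (x - y) ^ 2 = (a - c') * (c' - b) * (x' - y') ^ 2 :=
    h.mul_sub_sq_eq.trans h'.mul_sub_sq_eq.symm
  apply mul_left_cancel₀ hne
  linear_combination hprod_sq - (x' - y') * hprod

lemma mid_eq_or_add_eq (h : IsPathColoring monomialTriple a b (d₁, d₂, d₃) x c y)
    (h' : IsPathColoring monomialTriple a b (d₁, d₂, d₃) x' c' y') : c = c' ∨ c + c' = a + b := by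
  have hquad : (a - c) * (c - b) = (a - c') * (c' - b) := by
    apply mul_right_cancel₀ (sub_ne_zero.2 h.mid_ne)
    rw [h.mul_sub_eq, ← h'.mul_sub_eq, h.sub_eq_sub h']
  have hfactor : (c - c') * (c + c' - (a + b)) = 0 := by linear_combination -hquad
  simpa only [sub_eq_zero] using mul_eq_zero.1 hfactor

lemma eq_of_mid_eq (hab : a ≠ b) (h : IsPathColoring monomialTriple a b (d₁, d₂, d₃) x c y)
    (h' : IsPathColoring monomialTriple a b (d₁, d₂, d₃) x' c y') : x = x' := by
  apply mul_left_cancel₀ (sub_ne_zero.2 hab)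
  linear_combination h.coord_eqs.1 - h'.coord_eqs.1 + (c - b) * h.sub_eq_sub h'

lemma eq_of_closed (h2 : (2 : K) ≠ 0)
    (h : IsPathColoring monomialTriple a a (d₁, d₂, d₃) x c y)
    (h' : IsPathColoring monomialTriple a a (d₁, d₂, d₃) x' c' y') : x = x' := by
  have hsub := h.sub_eq_sub h'
  obtain ⟨h₁, -, h₃⟩ := h.coord_eqs
  obtain ⟨h₁', -, h₃'⟩ := h'.coord_eqs
  have hxy : x - y ≠ 0 := sub_ne_zero.2 h.mid_ne
  have hc : c = c' := by
    apply mul_right_cancel₀ hxy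
    linear_combination h₁' - h₁ + (a - c') * hsub
  subst hc
  have hadd : x + y = x' + y' := by
    apply mul_left_cancel₀ (mul_ne_zero (sub_ne_zero.2 h.left_ne) hxy)
    linear_combination h₃ - h₃' - (a - c) * (x' + y') * hsub
  apply mul_left_cancel₀ h2
  linear_combination hsub + hadd

end IsPathColoring

variable [IsDomain K]

lemma avoidsTheta34_monomialTriple (h2 : (2 : K) ≠ 0) :
    AvoidsTheta34 (monomialTriple : K → K → K × K × K) := by
  rintro a b ⟨d₁, d₂, d₃⟩ x c y h hx
  obtain rfl | hab := eq_or_ne a b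
  · exact absurd (hx ((h 0).eq_of_closed h2 (h 1))) (by decide)
  have hc : c.Injective := fun i j hij => hx ((h i).eq_of_mid_eq hab (hij ▸ h j))
  have hadd : ∀ {i j}, i ≠ j → c i + c j = a + b := fun hij =>
    ((h _).mid_eq_or_add_eq (h _)).resolve_left (hc.ne hij)
  have h₁₂ : c 1 = c 2 :=
    add_left_cancel ((hadd (i := 0) (j := 1) (by decide)).trans (hadd (by decide)).symm)
  exact absurd (hc h₁₂) (by decide)

lemma avoidsTheta34_flip_monomialTriple (h2 : (2 : K) ≠ 0) :
    AvoidsTheta34 (flip monomialTriple : K → K → K × K × K) := by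
  have hflip : flip monomialTriple = fun x y : K =>
      (AddEquiv.refl K).prodCongr AddEquiv.prodComm (monomialTriple x y) := by
    funext x y
    exact Prod.ext (mul_comm _ _) (Prod.ext (mul_comm _ _) (mul_comm _ _))
  rw [hflip]
  exact (avoidsTheta34_monomialTriple h2).addEquiv_comp _

end MonomialTriple

theorem fGraph_theta34_le {K B : Type} [CommRing K] [IsDomain K] [Fintype K] [AddCommGroup B]
    [Fintype B] (h2 : (2 : K) ≠ 0) (e : K × K × K ≃+ B × B) :
    fGraph theta34 (Fintype.card K * Fintype.card B) ≤ 2 * Fintype.card B :=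
  fGraph_le (not_containsSub_theta34_algGraph (avoidsTheta34_monomialTriple h2)
    (avoidsTheta34_flip_monomialTriple h2)) (isRKGraph_algGraph monomialTriple e)

lemma nonempty_galoisField_triple_addEquiv (p : ℕ) [Fact p.Prime] {n : ℕ} (hn : n ≠ 0) :
    Nonempty (GaloisField p (2 * n) × GaloisField p (2 * n) × GaloisField p (2 * n) ≃+
      (Fin (3 * n) → ZMod p) × (Fin (3 * n) → ZMod p)) := by
  refine ⟨(LinearEquiv.ofFinrankEq (R := ZMod p) _ _ ?_).toAddEquiv⟩
  simp only [Module.finrank_prod, GaloisField.finrank p (mul_ne_zero two_ne_zero hn),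
    Module.finrank_fin_fun]
  ring

/-- For every odd prime power `s`, `f(s⁵, θ_{3,4}) ≤ 2s³`. -/
theorem stmt18 (s : ℕ) (hs : IsPrimePow s) (hodd : Odd s) :
    fGraph theta34 (s ^ 5) ≤ 2 * s ^ 3 := by
  obtain ⟨p, n, hp, hn, rfl⟩ := hs
  have : Fact p.Prime := ⟨hp.nat_prime⟩
  let K := GaloisField p (2 * n)
  let B := Fin (3 * n) → ZMod p
  have : Fintype K := Fintype.ofFinite K
  have h2 : (2 : K) ≠ 0 := by
    refine Ring.two_ne_zero ?_
    rw [ringChar.eq K p]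
    rintro rfl
    exact absurd ((Nat.odd_pow_iff hn.ne').1 hodd) (by decide)
  have hcardK : Fintype.card K = p ^ (2 * n) := by
    rw [← Nat.card_eq_fintype_card, GaloisField.card p (2 * n) (by omega)]
  have hcardB : Fintype.card B = p ^ (3 * n) := by simp [B, ZMod.card]
  obtain ⟨e⟩ := nonempty_galoisField_triple_addEquiv p hn.ne'
  calc fGraph theta34 ((p ^ n) ^ 5)
      = fGraph theta34 (Fintype.card K * Fintype.card B) := by
        rw [hcardK, hcardB]
        congr 1
        ring
    _ ≤ 2 * Fintype.card B := fGraph_theta34_le h2 e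
    _ = 2 * (p ^ n) ^ 3 := by
        rw [hcardB]
        ring
end
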